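/- Let R be a Prüfer domain of Krull dimension at most 1, let n ≤ m, and let M ∈ M_{n×m}(R) be a matrix whose determinantal ideal D_n(M) of order n is nonzero; let δ be a nonzero element of D_n(M). Then there exists a decreasing chain of ideals a_1 ⊇ a_2 ⊇ ⋯ ⊇ a_n of R such that δ ∈ a_i for every i, ∏_{i=1}^n a_i = D_n(M), and the cokernel R^n ⧸ range(M·(−)) of the linear map R^m → R^n, X ↦ M·X, is isomorphic to ⊕_{i=1}^n R/a_i. -/

import Mathlib

/-- The determinantal ideal of order `k` of a matrix: the ideal generated by all
`k × k` minors. -/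
def detIdeal {R : Type*} [CommRing R] {n m : ℕ}
    (M : Matrix (Fin n) (Fin m) R) (k : ℕ) : Ideal R :=
  Ideal.span { x : R | ∃ (r : Fin k → Fin n) (c : Fin k → Fin m),
    x = (M.submatrix r c).det }

/-!
Modulo `I = (δ)` the ring becomes a zero-dimensional arithmetical ring `A`. There comparability of
two elements can be decided by an idempotent, so changes of basis can be glued along idempotents,
and Gaussian elimination puts the submodule generated by the columns of `M` in diagonal form
`⊕ (dᵢ)` with `d₁ ∣ d₂ ∣ ⋯`. Cramer's rule gives `δ Rⁿ ⊆ range M`, so nothing is lost for the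
cokernel, and `aᵢ` is the preimage of `(dᵢ)`. The product formula cannot be read off modulo `δ`,
since `∏ aᵢ` need not visibly contain `δ`; it follows from Fitting's lemma over `R`: the ideal
generated by the determinants of `n`-tuples of relations depends only on the presented module.
-/

section PierceChainRing

/-- An arithmetical ring: any two elements become comparable for divisibility locally, after
inverting `s` on one piece and `1 - s` on the other. Equivalently, every finitely generated ideal
is locally principal. -/
def IsArithmeticalRing (A : Type*) [CommRing A] : Prop :=
  ∀ x y : A, ∃ s : A, y ∣ s * x ∧ x ∣ (1 - s) * y

/-- A ring all of whose Pierce stalks are chain rings: any two elements become comparable for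
divisibility on the two factors cut out by some idempotent. -/
def IsPierceChainRing (A : Type*) [CommRing A] : Prop :=
  ∀ x y : A, ∃ e : A, IsIdempotentElem e ∧ y ∣ e * x ∧ x ∣ (1 - e) * y

variable {R A : Type*} [CommRing R] [CommRing A]

theorem IsArithmeticalRing.of_surjective (hR : IsArithmeticalRing R) (f : R →+* A)
    (hf : Function.Surjective f) : IsArithmeticalRing A := by
  intro x y
  obtain ⟨x, rfl⟩ := hf x
  obtain ⟨y, rfl⟩ := hf y
  obtain ⟨s, hyx, hxy⟩ := hR x y
  exact ⟨f s, by simpa using map_dvd f hyx, by simpa using map_dvd f hxy⟩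

theorem exists_dvd_mul_of_span_pair_mul_eq_span_singleton {x y c : R} {J : Ideal R}
    (hc : IsLeftRegular c) (hJ : Ideal.span {x, y} * J = Ideal.span {c}) :
    ∃ s, y ∣ s * x ∧ x ∣ (1 - s) * y := by
  have dvd_mul_of_mem {z w : R} (hz : z ∈ ({x, y} : Set R)) (hw : w ∈ J) : c ∣ z * w := by
    rw [← Ideal.mem_span_singleton, ← hJ]
    exact Ideal.mul_mem_mul (Ideal.subset_span hz) hw
  obtain ⟨u, hu, v, hv, huv⟩ : ∃ u ∈ J, ∃ v ∈ J, x * u + y * v = c := by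
    have hcJ : c ∈ Ideal.span {x, y} * J := hJ ▸ Ideal.mem_span_singleton_self c
    rw [Ideal.span_insert, Ideal.sup_mul, Submodule.mem_sup] at hcJ
    simpa only [Ideal.mem_span_singleton_mul, exists_exists_and_eq_and] using hcJ
  obtain ⟨s, hs⟩ : c ∣ y * v := dvd_mul_of_mem (by simp) hv
  obtain ⟨a, ha⟩ : c ∣ x * v := dvd_mul_of_mem (by simp) hv
  obtain ⟨b, hb⟩ : c ∣ y * u := dvd_mul_of_mem (by simp) hu
  refine ⟨s, ⟨a, hc ?_⟩, ⟨b, hc ?_⟩⟩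
  · linear_combination y * ha - x * hs
  · linear_combination y * hs - y * huv + x * hb

theorem isArithmeticalRing_of_fg_ideal_invertible [IsDomain R]
    (h : ∀ I : Ideal R, I.FG → I ≠ ⊥ →
      ∃ (J : Ideal R) (c : R), J.FG ∧ c ≠ 0 ∧ I * J = Ideal.span {c}) :
    IsArithmeticalRing R := by
  intro x y
  by_cases hxy : Ideal.span {x, y} = ⊥
  · obtain ⟨rfl, rfl⟩ : x = 0 ∧ y = 0 := by simpa [Ideal.span_eq_bot] using hxy
    exact ⟨0, by simp⟩
  · obtain ⟨J, c, -, hc, hJ⟩ := h _ (Submodule.fg_span (Set.toFinite _)) hxy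
    exact exists_dvd_mul_of_span_pair_mul_eq_span_singleton
      (IsLeftCancelMulZero.mul_left_cancel_of_ne_zero hc) hJ

theorem dimensionLEOne_of_forall_not_lt_lt [IsDomain R]
    (h : ∀ p q r : Ideal R, p.IsPrime → q.IsPrime → r.IsPrime → p < q → q < r → False) :
    Ring.DimensionLEOne R where
  maximalOfPrime {p} hp hprime := by
    obtain ⟨m, hm, hpm⟩ := p.exists_le_maximal hprime.ne_top
    obtain rfl | hlt := hpm.eq_or_lt
    · exact hm
    · exact (h ⊥ p m Ideal.isPrime_bot hprime hm.isPrime (bot_lt_iff_ne_bot.mpr hp) hlt).elim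

theorem krullDimLE_zero_quotient [Ring.DimensionLEOne R] {I : Ideal R} (hI : I ≠ ⊥) :
    Ring.KrullDimLE 0 (R ⧸ I) := by
  refine .mk₀ fun P hP ↦ ?_
  have hIP : I ≤ P.comap (Ideal.Quotient.mk I) := by
    rw [← Ideal.map_le_iff_le_comap, Ideal.map_quotient_self]
    exact bot_le
  exact Ideal.isMaximal_of_isIntegral_of_isMaximal_comap' _
    (RingHom.isIntegral_of_surjective _ Ideal.Quotient.mk_surjective) P
    ((hP.comap _).isMaximal (ne_bot_of_le_ne_bot hI hIP))

theorem isClopen_basicOpen_of_krullDimLE_zero [Ring.KrullDimLE 0 A] (s : A) :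
    IsClopen (PrimeSpectrum.basicOpen s : Set (PrimeSpectrum A)) := by
  refine ⟨?_, PrimeSpectrum.isOpen_basicOpen⟩
  rw [← PrimeSpectrum.localization_away_comap_range (Localization.Away s) s]
  refine PrimeSpectrum.isClosed_range_of_stableUnderSpecialization _ fun p q hpq hp ↦ ?_
  have hle : p.asIdeal ≤ q.asIdeal := (PrimeSpectrum.le_iff_specializes p q).mpr hpq
  have hmax : p.asIdeal.IsMaximal := p.isPrime.isMaximal'
  rwa [← PrimeSpectrum.ext (hmax.eq_of_le q.isPrime.ne_top hle)]

theorem exists_isIdempotentElem_dvd_and_dvd_pow [Ring.KrullDimLE 0 A] (s : A) :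
    ∃ e : A, IsIdempotentElem e ∧ s ∣ e ∧ ∃ k : ℕ, e ∣ s ^ k := by
  obtain ⟨e, he, heq⟩ := PrimeSpectrum.exists_idempotent_basicOpen_eq_of_isClopen
    (isClopen_basicOpen_of_krullDimLE_zero s)
  have heq : PrimeSpectrum.basicOpen s = PrimeSpectrum.basicOpen e := SetLike.coe_injective heq
  obtain ⟨k, hk⟩ := (PrimeSpectrum.basicOpen_le_basicOpen_iff _ _).mp heq.le
  obtain ⟨l, hl⟩ := (PrimeSpectrum.basicOpen_le_basicOpen_iff _ _).mp heq.ge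
  rw [Ideal.mem_span_singleton] at hk hl
  exact ⟨e, he, hl.trans (dvd_of_mul_right_eq e (by rw [← pow_succ, he.pow_succ_eq])), k, hk⟩

theorem IsArithmeticalRing.isPierceChainRing [Ring.KrullDimLE 0 A] (hA : IsArithmeticalRing A) :
    IsPierceChainRing A := by
  intro x y
  obtain ⟨s, hyx, hxy⟩ := hA x y
  obtain ⟨e, he, hse, k, hes⟩ := exists_isIdempotentElem_dvd_and_dvd_pow s
  -- On the factor cut out by `1 - e` the element `s` is nilpotent, so `1 - s` is invertible there.
  have hdvd : 1 - s ∣ 1 - e := by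
    obtain ⟨q, hq⟩ : 1 - s ∣ 1 - s ^ k := by simpa using sub_dvd_pow_sub_pow 1 s k
    obtain ⟨t, ht⟩ := hes
    exact ⟨(1 - e) * q, by linear_combination (1 - e) * hq + (1 - e) * ht - t * he.eq⟩
  exact ⟨e, he, hyx.trans (mul_dvd_mul_right hse x), hxy.trans (mul_dvd_mul_right hdvd y)⟩

theorem IsArithmeticalRing.isPierceChainRing_quotient [Ring.DimensionLEOne R]
    (hR : IsArithmeticalRing R) {I : Ideal R} (hI : I ≠ ⊥) : IsPierceChainRing (R ⧸ I) := by
  have : Ring.KrullDimLE 0 (R ⧸ I) := krullDimLE_zero_quotient hI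
  exact (hR.of_surjective _ Ideal.Quotient.mk_surjective).isPierceChainRing

theorem IsPierceChainRing.exists_idempotent_combination_dvd (hA : IsPierceChainRing A) (x y : A) :
    ∃ e : A, IsIdempotentElem e ∧ e * x + (1 - e) * y ∣ x ∧ e * x + (1 - e) * y ∣ y := by
  obtain ⟨f, hf, ⟨a, ha⟩, b, hb⟩ := hA x y
  refine ⟨1 - f, hf.one_sub, ⟨1 - f + a * f, ?_⟩, ⟨f + b * (1 - f), ?_⟩⟩
  · linear_combination f * ha + (-2 * x + a * x + y - a * y) * hf.eq
  · linear_combination (1 - f) * hb + (-2 * y + b * y + x - b * x) * hf.eq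

end PierceChainRing

section Diagonalization

variable {A F G : Type*} [CommRing A] [AddCommGroup F] [Module A F] [AddCommGroup G] [Module A G]

theorem idempotent_combination_comp_symm {e : A} (he : IsIdempotentElem e) (g h : F ≃ₗ[A] G) :
    (e • g.toLinearMap + (1 - e) • h.toLinearMap) ∘ₗ
      (e • g.symm.toLinearMap + (1 - e) • h.symm.toLinearMap) = LinearMap.id := by
  ext x
  simp only [LinearMap.comp_apply, LinearMap.add_apply, LinearMap.smul_apply, LinearEquiv.coe_coe,
    map_add, map_smul, smul_add, smul_smul, LinearEquiv.apply_symm_apply, he.eq, he.one_sub.eq,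
    he.mul_one_sub_self, he.one_sub_mul_self, zero_smul, add_zero, zero_add, ← add_smul,
    add_sub_cancel, one_smul, LinearMap.id_apply]

/-- The linear equivalence that is `g` on the factor of the base ring cut out by the idempotent `e`
and `h` on the complementary factor. -/
def idempotentGlue {e : A} (he : IsIdempotentElem e) (g h : F ≃ₗ[A] G) : F ≃ₗ[A] G :=
  .ofLinearMap (e • g.toLinearMap + (1 - e) • h.toLinearMap)
    (e • g.symm.toLinearMap + (1 - e) • h.symm.toLinearMap)
    (idempotent_combination_comp_symm he g h)
    (idempotent_combination_comp_symm he g.symm h.symm)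

theorem idempotentGlue_apply {e : A} (he : IsIdempotentElem e) (g h : F ≃ₗ[A] G) (x : F) :
    idempotentGlue he g h x = e • g x + (1 - e) • h x :=
  rfl

/-- The possible pivots of a submodule `N` of `ι → A` at position `i₀`: the values taken at `i₀` by
elements of `N` after an arbitrary change of basis of `ι → A`. -/
def pivotValues {ι : Type*} (N : Submodule A (ι → A)) (i₀ : ι) : Set A :=
  {a | ∃ g : (ι → A) ≃ₗ[A] (ι → A), ∃ x ∈ N, g x i₀ = a}

variable {ι : Type*} {N : Submodule A (ι → A)} {i₀ : ι}

theorem zero_mem_pivotValues : 0 ∈ pivotValues N i₀ :=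
  ⟨.refl A _, 0, N.zero_mem, rfl⟩

theorem apply_mem_pivotValues {x : ι → A} (hx : x ∈ N) (i : ι) : x i ∈ pivotValues N i₀ := by
  classical
  exact ⟨.funCongrLeft A A (Equiv.swap i₀ i), x, hx, by simp [LinearEquiv.funCongrLeft_apply]⟩

theorem idempotent_combination_mem_pivotValues {e a b : A} (he : IsIdempotentElem e)
    (ha : a ∈ pivotValues N i₀) (hb : b ∈ pivotValues N i₀) :
    e * a + (1 - e) * b ∈ pivotValues N i₀ := by
  obtain ⟨g, x, hx, rfl⟩ := ha
  obtain ⟨h, y, hy, rfl⟩ := hb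
  refine ⟨idempotentGlue he g h, e • x + (1 - e) • y,
    N.add_mem (N.smul_mem e hx) (N.smul_mem (1 - e) hy), ?_⟩
  simp only [idempotentGlue_apply, map_add, map_smul, Pi.add_apply, Pi.smul_apply, smul_eq_mul]
  linear_combination (g x i₀ - g y i₀ - h x i₀ + h y i₀) * he.eq

theorem IsPierceChainRing.exists_mem_pivotValues_dvd (hA : IsPierceChainRing A) (T : Finset A)
    (hT : ∀ t ∈ T, t ∈ pivotValues N i₀) : ∃ d ∈ pivotValues N i₀, ∀ t ∈ T, d ∣ t := by
  classical
  induction T using Finset.induction_on with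
  | empty => exact ⟨0, zero_mem_pivotValues, by simp⟩
  | insert a T _ ih =>
    rw [Finset.forall_mem_insert] at hT
    obtain ⟨d, hd, hdT⟩ := ih hT.2
    obtain ⟨e, he, hed, hea⟩ := hA.exists_idempotent_combination_dvd d a
    exact ⟨_, idempotent_combination_mem_pivotValues he hd hT.1,
      (Finset.forall_mem_insert ..).mpr ⟨hea, fun t ht ↦ hed.trans (hdT t ht)⟩⟩

theorem dvd_map_apply {κ : Type*} (f : (ι → A) →ₗ[A] (κ → A)) {d : A} {x : ι → A}
    (hx : ∀ i, d ∣ x i) (k : κ) : d ∣ f x k := by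
  choose z hz using hx
  obtain rfl : x = d • z := funext hz
  exact ⟨f z k, by rw [map_smul, Pi.smul_apply, smul_eq_mul]⟩

theorem IsPierceChainRing.exists_pivot [Finite ι] (hA : IsPierceChainRing A) (hN : N.FG)
    (i₀ : ι) : ∃ (g : (ι → A) ≃ₗ[A] (ι → A)), ∃ x ∈ N, ∀ y ∈ N, ∀ i, g x i₀ ∣ g y i := by
  classical
  cases nonempty_fintype ι
  obtain ⟨s, rfl⟩ := hN
  obtain ⟨_, ⟨g, x, hx, rfl⟩, hdvd⟩ := hA.exists_mem_pivotValues_dvd (i₀ := i₀)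
    ((s ×ˢ Finset.univ).image fun p ↦ p.1 p.2) (by
      simp only [Finset.forall_mem_image, Finset.mem_product, and_imp, Prod.forall]
      exact fun y i hy _ ↦ apply_mem_pivotValues (Submodule.subset_span hy) i)
  have hle : Submodule.span A (s : Set (ι → A)) ≤
      Submodule.pi Set.univ fun _ ↦ Ideal.span {g x i₀} := by
    rw [Submodule.span_le]
    intro y hy i _
    exact Ideal.mem_span_singleton.mpr
      (hdvd _ (Finset.mem_image_of_mem _ (Finset.mk_mem_product hy (Finset.mem_univ i))))
  exact ⟨g, x, hx, fun y hy ↦ dvd_map_apply g.toLinearMap fun i ↦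
    Ideal.mem_span_singleton.mp (hle hy i (Set.mem_univ i))⟩

theorem exists_linearEquiv_apply_eq_single [DecidableEq ι] {x : ι → A} (hx : ∀ i, x i₀ ∣ x i) :
    ∃ g : (ι → A) ≃ₗ[A] (ι → A), g x = Pi.single i₀ (x i₀) := by
  choose c hc using hx
  let w : ι → A := -Function.update c i₀ 0
  have hw : LinearMap.proj (R := A) (φ := fun _ : ι ↦ A) i₀ w = 0 := by simp [w]
  refine ⟨.transvection hw, funext fun i ↦ ?_⟩
  obtain rfl | hi := eq_or_ne i i₀
  · simp [LinearMap.transvection.apply, w]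
  · simp [LinearMap.transvection.apply, w, hi, ← hc i]

theorem IsPierceChainRing.exists_single_mem_map [Finite ι] [DecidableEq ι]
    (hA : IsPierceChainRing A) (hN : N.FG) (i₀ : ι) :
    ∃ (g : (ι → A) ≃ₗ[A] (ι → A)) (d : A),
      Pi.single i₀ d ∈ N.map g.toLinearMap ∧ ∀ y ∈ N.map g.toLinearMap, ∀ i, d ∣ y i := by
  obtain ⟨g, x, hx, hdvd⟩ := hA.exists_pivot hN i₀
  obtain ⟨h, hh⟩ := exists_linearEquiv_apply_eq_single (hdvd x hx)
  refine ⟨g.trans h, g x i₀, ⟨x, hx, hh⟩, ?_⟩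
  rintro _ ⟨y, hy, rfl⟩
  exact dvd_map_apply h.toLinearMap (hdvd y hy)

variable {n : ℕ}

theorem mem_iff_dvd_and_tail_mem_map {N : Submodule A (Fin (n + 1) → A)} {d : A}
    (hd : Pi.single 0 d ∈ N) (hdvd : ∀ y ∈ N, ∀ i, d ∣ y i) (y : Fin (n + 1) → A) :
    y ∈ N ↔ d ∣ y 0 ∧ Fin.tail y ∈ N.map (LinearMap.funLeft A A Fin.succ) := by
  refine ⟨fun hy ↦ ⟨hdvd y hy 0, y, hy, rfl⟩, ?_⟩
  rintro ⟨hy, z, hz, hzy⟩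
  obtain ⟨c, hc⟩ := dvd_sub hy (hdvd z hz 0)
  have hyz : y = z + c • Pi.single 0 d := by
    ext i
    cases i using Fin.cases with
    | zero => simp [mul_comm c, ← hc]
    | succ i => simpa [Fin.tail] using (congrFun hzy i).symm
  rw [hyz]
  exact N.add_mem hz (N.smul_mem c hd)

/-- A submodule `N` of `Aⁿ` is diagonalizable if a change of basis turns it into
`(d₁) × ⋯ × (dₙ)` with `d₁ ∣ ⋯ ∣ dₙ`: a Smith normal form of any matrix whose columns generate
`N`. -/
def IsDiagonalizable (N : Submodule A (Fin n → A)) : Prop :=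
  ∃ (g : (Fin n → A) ≃ₗ[A] (Fin n → A)) (d : Fin n → A),
    (∀ i j, i ≤ j → d i ∣ d j) ∧ ∀ y, y ∈ N ↔ ∀ i, d i ∣ g y i

theorem IsDiagonalizable.of_map {N : Submodule A (Fin n → A)} (g : (Fin n → A) ≃ₗ[A] (Fin n → A))
    (h : IsDiagonalizable (N.map g.toLinearMap)) : IsDiagonalizable N := by
  obtain ⟨k, d, hd, hk⟩ := h
  exact ⟨g.trans k, d, hd, fun y ↦ by rw [LinearEquiv.trans_apply, ← hk]; simp⟩

theorem IsDiagonalizable.of_tail {N : Submodule A (Fin (n + 1) → A)} {d : A}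
    (hd : Pi.single 0 d ∈ N) (hdvd : ∀ y ∈ N, ∀ i, d ∣ y i)
    (h : IsDiagonalizable (N.map (LinearMap.funLeft A A Fin.succ))) : IsDiagonalizable N := by
  obtain ⟨g, d', hd', hg⟩ := h
  have dvd_d' (j : Fin n) : d ∣ d' j := by
    have hmem : g.symm (Pi.single j (d' j)) ∈ N.map (LinearMap.funLeft A A Fin.succ) := by
      rw [hg]
      intro i
      obtain rfl | hij := eq_or_ne i j <;> simp [*]
    obtain ⟨y, hy, hyj⟩ := hmem
    have := dvd_map_apply (g.toLinearMap ∘ₗ LinearMap.funLeft A A Fin.succ) (hdvd y hy) j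
    simpa [hyj] using this
  let consEquiv := Fin.consLinearEquiv A fun _ : Fin (n + 1) ↦ A
  refine ⟨consEquiv.symm.trans (((LinearEquiv.refl A A).prodCongr g).trans consEquiv),
    Fin.cons d d', ?_, fun y ↦ ?_⟩
  · intro i j hij
    cases i using Fin.cases <;> cases j using Fin.cases
    · simp
    · simpa using dvd_d' _
    · simp at hij
    · simpa using hd' _ _ (by simpa using hij)
  · rw [mem_iff_dvd_and_tail_mem_map hd hdvd, hg, Fin.forall_fin_succ]
    rfl

theorem IsPierceChainRing.isDiagonalizable (hA : IsPierceChainRing A) :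
    ∀ {n : ℕ} {N : Submodule A (Fin n → A)}, N.FG → IsDiagonalizable N
  | 0, N, _ => ⟨.refl A _, 0, fun i ↦ i.elim0, fun y ↦
      ⟨fun _ i ↦ i.elim0, fun _ ↦ Subsingleton.elim 0 y ▸ N.zero_mem⟩⟩
  | _ + 1, N, hN => by
    obtain ⟨g, d, hd, hdvd⟩ := hA.exists_single_mem_map hN 0
    exact .of_map g (.of_tail hd hdvd (hA.isDiagonalizable ((hN.map _).map _)))

end Diagonalization

section Fitting

open Matrix

variable {R : Type*} [CommRing R] {n : ℕ}

/-- The zeroth Fitting ideal of `Rⁿ ⧸ N`, computed from the presentation: it is generated by the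
determinants of the square matrices with rows in `N`. -/
def zerothFittingIdeal (N : Submodule R (Fin n → R)) : Ideal R :=
  Ideal.span {x | ∃ V : Matrix (Fin n) (Fin n) R, (∀ i, V i ∈ N) ∧ V.det = x}

theorem det_mem_zerothFittingIdeal {N : Submodule R (Fin n → R)} {V : Matrix (Fin n) (Fin n) R}
    (hV : ∀ i, V i ∈ N) : V.det ∈ zerothFittingIdeal N :=
  Ideal.subset_span ⟨V, hV, rfl⟩

theorem zerothFittingIdeal_le_iff {N : Submodule R (Fin n → R)} {I : Ideal R} :
    zerothFittingIdeal N ≤ I ↔ ∀ V : Matrix (Fin n) (Fin n) R, (∀ i, V i ∈ N) → V.det ∈ I := by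
  simp only [zerothFittingIdeal, Ideal.span_le, Set.subset_def, Set.mem_ofPred_eq,
    forall_exists_index, and_imp, SetLike.mem_coe]
  exact ⟨fun h V hV ↦ h _ V hV rfl, fun h _ V hV hx ↦ hx ▸ h V hV⟩

theorem zerothFittingIdeal_span_range {κ : Type*} [Finite κ] (v : κ → Fin n → R) :
    zerothFittingIdeal (Submodule.span R (Set.range v)) =
      Ideal.span (Set.range fun c : Fin n → κ ↦ (Matrix.of fun i ↦ v (c i)).det) := by
  cases nonempty_fintype κ
  apply le_antisymm
  · rw [zerothFittingIdeal_le_iff]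
    intro V hV
    choose w hw using fun i ↦ (Submodule.mem_span_range_iff_exists_fun R).mp (hV i)
    obtain rfl : (fun i ↦ ∑ j, w i j • v j) = V := funext hw
    have hdet : Matrix.det (fun i ↦ ∑ j, w i j • v j) =
        ∑ c : Fin n → κ, (∏ i, w i (c i)) * (Matrix.of fun i ↦ v (c i)).det := by
      refine (Matrix.detRowAlternating.toMultilinearMap.map_sum fun i j ↦ w i j • v j).trans ?_
      exact Finset.sum_congr rfl fun c _ ↦ MultilinearMap.map_smul_univ ..
    rw [hdet]
    exact Ideal.sum_mem _ fun c _ ↦ Ideal.mul_mem_left _ _ (Ideal.subset_span ⟨c, rfl⟩)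
  · rw [Ideal.span_le]
    rintro _ ⟨c, rfl⟩
    exact det_mem_zerothFittingIdeal fun i ↦ Submodule.subset_span ⟨c i, rfl⟩

theorem detIdeal_eq_zerothFittingIdeal_range {m : ℕ} (M : Matrix (Fin n) (Fin m) R) :
    detIdeal M n = zerothFittingIdeal (LinearMap.range M.mulVecLin) := by
  have hcol (c : Fin n → Fin m) :
      (Matrix.of fun i ↦ M.col (c i)).det = (M.submatrix id c).det :=
    (M.submatrix id c).det_transpose
  simp only [Matrix.range_mulVecLin, zerothFittingIdeal_span_range, hcol]
  apply le_antisymm <;> rw [detIdeal, Ideal.span_le]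
  · rintro _ ⟨r, c, rfl⟩
    have hrow : M.submatrix r c =
        (1 : Matrix (Fin n) (Fin n) R).submatrix r id * M.submatrix id c := by
      ext i j
      simp [Matrix.mul_apply, Matrix.one_apply]
    rw [hrow, Matrix.det_mul]
    exact Ideal.mul_mem_left _ _ (Ideal.subset_span ⟨c, rfl⟩)
  · rintro _ ⟨c, rfl⟩
    exact Ideal.subset_span ⟨id, c, rfl⟩

theorem smul_mem_of_mem_zerothFittingIdeal {N : Submodule R (Fin n → R)} {x : R}
    (hx : x ∈ zerothFittingIdeal N) (w : Fin n → R) : x • w ∈ N := by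
  suffices h : zerothFittingIdeal N ≤ N.comap (LinearMap.toSpanSingleton R _ w) from h hx
  rw [zerothFittingIdeal_le_iff]
  intro V hV
  have hcramer : V.det • w = (w ᵥ* V.adjugate) ᵥ* V := by
    rw [Matrix.vecMul_vecMul, Matrix.adjugate_mul, Matrix.vecMul_smul, Matrix.vecMul_one]
  rw [Submodule.mem_comap, LinearMap.toSpanSingleton_apply, hcramer, Matrix.vecMul_eq_sum]
  exact N.sum_mem fun i _ ↦ N.smul_mem _ (hV i)

theorem zerothFittingIdeal_pi (a : Fin n → Ideal R) :
    zerothFittingIdeal (Submodule.pi Set.univ a) = ∏ i, a i := by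
  apply le_antisymm
  · rw [zerothFittingIdeal_le_iff]
    intro V hV
    rw [Matrix.det_apply]
    exact Ideal.sum_mem _ fun σ _ ↦ Submodule.smul_of_tower_mem _ _ <|
      Ideal.prod_mem_prod fun i _ ↦ hV (σ i) i (Set.mem_univ i)
  · rw [show ∏ i, a i = ∏ i, Ideal.span (a i : Set R) by simp only [Ideal.span_eq],
      Ideal.prod_span, Ideal.span_le]
    intro x hx
    obtain ⟨f, hf, rfl⟩ := (Set.mem_fintype_prod _ _).mp hx
    rw [← Matrix.det_diagonal]
    refine det_mem_zerothFittingIdeal fun i j _ ↦ ?_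
    obtain rfl | hij := eq_or_ne i j
    · simpa using hf i
    · simp [Matrix.diagonal_apply_ne _ hij]

theorem det_mem_zerothFittingIdeal_of_castAdd_mem {N : Submodule R (Fin n → R)} {k : ℕ}
    {B : Matrix (Fin (n + k)) (Fin (n + k)) R} (hB : ∀ i, (fun j ↦ B i (Fin.castAdd k j)) ∈ N) :
    B.det ∈ zerothFittingIdeal N := by
  induction k with
  | zero => exact det_mem_zerothFittingIdeal hB
  | succ k ih =>
    rw [Matrix.det_succ_column B (Fin.last (n + k))]
    have hcol (j : Fin n) :
        (Fin.last (n + k)).succAbove (Fin.castAdd k j) = Fin.castAdd (k + 1) j :=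
      Fin.succAbove_last_apply _
    refine Ideal.sum_mem _ fun i _ ↦ Ideal.mul_mem_left _ _ (ih fun i' ↦ ?_)
    simp only [submatrix_apply, hcol]
    exact hB (i.succAbove i')

theorem det_mem_zerothFittingIdeal_of_mul_mem {N : Submodule R (Fin n → R)}
    (V P Q : Matrix (Fin n) (Fin n) R) (hVP : ∀ i, (V * P) i ∈ N) (hQP : ∀ i, (1 - Q * P) i ∈ N) :
    V.det ∈ zerothFittingIdeal N := by
  -- A column operation takes `[1, Q; 0, V]` to `B`, and the left half of each row of `B` is in `N`.
  let B := fromBlocks (1 - Q * P) Q (-(V * P)) V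
  have hB : B = fromBlocks 1 Q 0 V * fromBlocks 1 0 (-P) 1 := by
    simp [B, fromBlocks_multiply, sub_eq_add_neg]
  have hdet : (reindex finSumFinEquiv finSumFinEquiv B).det = V.det := by
    rw [det_reindex_self, hB, det_mul, det_fromBlocks_zero₂₁, det_fromBlocks_zero₁₂]
    simp
  rw [← hdet]
  refine det_mem_zerothFittingIdeal_of_castAdd_mem fun i ↦ ?_
  obtain ⟨i | i, rfl⟩ := finSumFinEquiv.surjective i <;>
    simp only [reindex_apply, submatrix_apply, ← finSumFinEquiv_apply_left, Equiv.symm_apply_apply]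
  · exact hQP i
  · exact N.neg_mem (hVP i)

variable {C : Type*} [AddCommGroup C] [Module R C]

theorem zerothFittingIdeal_ker_le {p q : (Fin n → R) →ₗ[R] C} (hp : Function.Surjective p)
    (hq : Function.Surjective q) :
    zerothFittingIdeal (LinearMap.ker p) ≤ zerothFittingIdeal (LinearMap.ker q) := by
  obtain ⟨f, hf⟩ := Module.projective_lifting_property q p hq
  obtain ⟨g, hg⟩ := Module.projective_lifting_property p q hp
  have vecMul_toMatrixRight' (h : (Fin n → R) →ₗ[R] (Fin n → R)) (x) :
      x ᵥ* h.toMatrixRight' = h x :=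
    LinearMap.congr_fun (LinearMap.toMatrixRight'.symm_apply_apply h) x
  have qf (x) : q (f x) = p x := LinearMap.congr_fun hf x
  have pg (x) : p (g x) = q x := LinearMap.congr_fun hg x
  rw [zerothFittingIdeal_le_iff]
  intro V hV
  refine det_mem_zerothFittingIdeal_of_mul_mem V f.toMatrixRight' g.toMatrixRight'
    (fun i ↦ ?_) (fun i ↦ ?_)
  · rw [mul_apply_eq_vecMul, vecMul_toMatrixRight', LinearMap.mem_ker, qf]
    exact hV i
  · rw [← one_mul (1 - g.toMatrixRight' * f.toMatrixRight'), mul_apply_eq_vecMul, vecMul_sub,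
      ← vecMul_vecMul, vecMul_one, vecMul_toMatrixRight', vecMul_toMatrixRight', LinearMap.mem_ker,
      map_sub, qf, pg, sub_self]

theorem zerothFittingIdeal_ker_eq {p q : (Fin n → R) →ₗ[R] C} (hp : Function.Surjective p)
    (hq : Function.Surjective q) :
    zerothFittingIdeal (LinearMap.ker p) = zerothFittingIdeal (LinearMap.ker q) :=
  (zerothFittingIdeal_ker_le hp hq).antisymm (zerothFittingIdeal_ker_le hq hp)

end Fitting

section QuotientDiagonalization

variable {R : Type*} [CommRing R] {n : ℕ} {N : Submodule R (Fin n → R)} {I : Ideal R}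

theorem ker_mkQ_compLeft_le (hI : I ≤ zerothFittingIdeal N) :
    LinearMap.ker (I.mkQ.compLeft (Fin n)) ≤ N := by
  intro x hx
  have hxI (i) : x i ∈ I := (Submodule.Quotient.mk_eq_zero I).mp (congrFun hx i)
  rw [pi_eq_sum_univ' x]
  exact N.sum_mem fun i _ ↦ smul_mem_of_mem_zerothFittingIdeal (hI (hxI i)) _

theorem IsPierceChainRing.exists_mem_iff_forall_dvd (hA : IsPierceChainRing (R ⧸ I)) (hN : N.FG)
    (hIN : LinearMap.ker (I.mkQ.compLeft (Fin n)) ≤ N) :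
    ∃ (g : (Fin n → R ⧸ I) ≃ₗ[R ⧸ I] (Fin n → R ⧸ I)) (d : Fin n → R ⧸ I),
      (∀ i j, i ≤ j → d i ∣ d j) ∧ ∀ x, x ∈ N ↔ ∀ i, d i ∣ g (I.mkQ.compLeft (Fin n) x) i := by
  set π := I.mkQ.compLeft (Fin n)
  let N' : Submodule (R ⧸ I) (Fin n → R ⧸ I) := .span (R ⧸ I) (N.map π : Set (Fin n → R ⧸ I))
  have hN' : N'.restrictScalars R = N.map π := by
    rw [Submodule.restrictScalars_span R (R ⧸ I) Ideal.Quotient.mk_surjective, Submodule.span_eq]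
  have hfg : N'.FG := .of_restrictScalars (R := R) (hN' ▸ hN.map π)
  obtain ⟨g, d, hd, hg⟩ := hA.isDiagonalizable hfg
  refine ⟨g, d, hd, fun x ↦ ?_⟩
  rw [← hg, ← N'.restrictScalars_mem R, hN', ← Submodule.mem_comap,
    Submodule.comap_map_eq_self hIN]

theorem exists_ideals_of_le_zerothFittingIdeal (hA : IsPierceChainRing (R ⧸ I)) (hN : N.FG)
    (hI : I ≤ zerothFittingIdeal N) :
    ∃ a : Fin n → Ideal R,
      (∀ i j, i ≤ j → a j ≤ a i) ∧
      (∀ i, I ≤ a i) ∧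
      ∏ i, a i = zerothFittingIdeal N ∧
      Nonempty (((Fin n → R) ⧸ N) ≃ₗ[R] ((i : Fin n) → R ⧸ a i)) := by
  obtain ⟨g, d, hd, hg⟩ := hA.exists_mem_iff_forall_dvd hN (ker_mkQ_compLeft_le hI)
  set π := I.mkQ.compLeft (Fin n)
  have hπ : Function.Surjective π := I.mkQ_surjective.comp_left
  let D : Submodule R (Fin n → R ⧸ I) :=
    (Submodule.pi Set.univ fun i ↦ Ideal.span {d i}).restrictScalars R
  let a (i : Fin n) : Ideal R := (Ideal.span {d i}).comap (Ideal.Quotient.mk I)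
  let p := D.mkQ ∘ₗ g.toLinearMap.restrictScalars R ∘ₗ π
  let q := D.mkQ ∘ₗ π
  have hp : Function.Surjective p := D.mkQ_surjective.comp (g.surjective.comp hπ)
  have hq : Function.Surjective q := D.mkQ_surjective.comp hπ
  have ker_p : LinearMap.ker p = N := by
    ext x
    simp [p, D, hg, Ideal.mem_span_singleton, Submodule.mem_pi]
  have ker_q : LinearMap.ker q = Submodule.pi Set.univ a := by
    ext x
    simp [q, D, a, π, Submodule.mem_pi]
  refine ⟨a, fun i j hij ↦ Ideal.comap_mono ?_, fun i ↦ ?_, ?_, ⟨?_⟩⟩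
  · exact Ideal.span_singleton_le_span_singleton.mpr (hd i j hij)
  · exact I.mk_ker.ge.trans (Ideal.comap_mono bot_le)
  · rw [← zerothFittingIdeal_pi, ← ker_q, ← ker_p, zerothFittingIdeal_ker_eq hp hq]
  · exact (Submodule.quotEquivOfEq _ _ ker_p.symm).trans <|
      (p.quotKerEquivOfSurjective hp).trans <| (q.quotKerEquivOfSurjective hq).symm.trans <|
      (Submodule.quotEquivOfEq _ _ ker_q).trans (Submodule.quotientPi a)

end QuotientDiagonalization

theorem stmt_19_general {R : Type*} [CommRing R] {n m : ℕ} (M : Matrix (Fin n) (Fin m) R)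
    {I : Ideal R} (hI : I ≤ detIdeal M n) (hA : IsPierceChainRing (R ⧸ I)) :
    ∃ a : Fin n → Ideal R,
      (∀ i j : Fin n, i ≤ j → a j ≤ a i) ∧
      (∀ i, I ≤ a i) ∧
      (∏ i, a i) = detIdeal M n ∧
      Nonempty (((Fin n → R) ⧸ LinearMap.range M.mulVecLin) ≃ₗ[R]
        ((i : Fin n) → R ⧸ a i)) := by
  rw [detIdeal_eq_zerothFittingIdeal_range] at hI ⊢
  exact exists_ideals_of_le_zerothFittingIdeal hA (Module.Finite.iff_fg.mp inferInstance) hI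

/-- Over a Prüfer domain of Krull dimension at most 1, for an `n × m` matrix `M`
(`n ≤ m`) with `D_n(M) ≠ 0` and `δ ≠ 0` in `D_n(M)`, the cokernel of `M` is isomorphic
to `⊕ᵢ R⧸aᵢ` for a decreasing chain of ideals `aᵢ` containing `δ` with
`∏ᵢ aᵢ = D_n(M)`. -/
theorem stmt_19 {R : Type*} [CommRing R] [IsDomain R]
    (hpruf : ∀ I : Ideal R, I.FG → I ≠ ⊥ →
      ∃ (J : Ideal R) (c : R), J.FG ∧ c ≠ 0 ∧ I * J = Ideal.span {c})
    (hdim : ∀ p q r : Ideal R, p.IsPrime → q.IsPrime → r.IsPrime → p < q → q < r → False)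
    {n m : ℕ} (hnm : n ≤ m) (M : Matrix (Fin n) (Fin m) R)
    (hD : detIdeal M n ≠ ⊥) (δ : R) (hδ0 : δ ≠ 0) (hδ : δ ∈ detIdeal M n) :
    ∃ a : Fin n → Ideal R,
      (∀ i j : Fin n, i ≤ j → a j ≤ a i) ∧
      (∀ i, δ ∈ a i) ∧
      (∏ i, a i) = detIdeal M n ∧
      Nonempty (((Fin n → R) ⧸ LinearMap.range M.mulVecLin) ≃ₗ[R]
        ((i : Fin n) → R ⧸ a i)) := by
  have : Ring.DimensionLEOne R := dimensionLEOne_of_forall_not_lt_lt hdim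
  have hA : IsPierceChainRing (R ⧸ Ideal.span {δ}) :=
    (isArithmeticalRing_of_fg_ideal_invertible hpruf).isPierceChainRing_quotient
      (by rwa [Ne, Ideal.span_singleton_eq_bot])
  simpa only [Ideal.span_singleton_le_iff_mem] using
    stmt_19_general M ((Ideal.span_singleton_le_iff_mem _).mpr hδ) hA
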